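/- Let n ≥ 4, let (b_{ij})_{1≤i,j≤n} be a symmetric real array with Σ_{s≠r} b_{rs} = 0 for every r, let π be a uniformly distributed random permutation of {1,…,n}, and let i, j, k, ℓ be four distinct indices. Then E[ b_{π(i)π(j)} b_{π(k)π(ℓ)} ] = 2μ₂/((n−2)(n−3)), where μ₂ = (1/(n(n−1))) Σ_{r≠s} b_{rs}². -/

import Mathlib

open Finset

/-- Expectation with respect to a uniformly distributed random permutation of `{1, …, n}`:
the average of `f` over the symmetric group on `Fin n`. -/
noncomputable def permE (n : ℕ) (f : Equiv.Perm (Fin n) → ℝ) : ℝ :=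
  (∑ π : Equiv.Perm (Fin n), f π) / (Nat.factorial n)

/-! Given `π i` and `π j`, the pair `(π k, π ℓ)` is uniform over the ordered pairs of distinct
indices that avoid `π i` and `π j`. If the rows and columns of `b` sum to zero, the sum of `b` over
these pairs equals, by inclusion–exclusion, its sum over the pairs inside `{π i, π j}`. Hence, for
every array `a`, the mixed moment `E[a_{π(i)π(j)} b_{π(k)π(ℓ)}]` is a multiple of
`E[a_{π(i)π(j)} (b_{π(i)π(j)} + b_{π(j)π(i)})]`, in which `(π i, π j)` is a uniform pair of
distinct indices. -/

open scoped BigOperators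

section OffDiagSums

lemma cast_card_offDiag {α R : Type*} [CommRing R] (s : Finset α) :
    (#s.offDiag : R) = #s * (#s - 1) := by
  rw [offDiag_card, Nat.cast_sub (Nat.le_mul_self _), Nat.cast_mul, mul_sub_one]

variable {α M : Type*} [DecidableEq α]

lemma sum_offDiag_eq_sum_sum [AddCommMonoid M] (s : Finset α) (f : α → α → M) :
    ∑ p ∈ s.offDiag, f p.1 p.2 = ∑ x ∈ s, ∑ y ∈ s \ {x}, f x y :=
  sum_finset_product' s.offDiag s (s \ {·}) fun p => by
    simp only [mem_offDiag, mem_sdiff, mem_singleton, ne_eq, eq_comm]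

variable [Fintype α] [AddCommGroup M]

lemma sum_compl_sdiff_singleton_eq_neg_sum {f : α → M} {x : α} (hf : ∑ y ∈ univ \ {x}, f y = 0)
    {s : Finset α} (hx : x ∉ s) : ∑ y ∈ sᶜ \ {x}, f y = -∑ y ∈ s, f y := by
  have hs : s ⊆ univ \ {x} := by simpa [subset_sdiff] using hx
  rw [eq_neg_iff_add_eq_zero, compl_eq_univ_sdiff, sdiff_right_comm, sum_sdiff hs, hf]

/-- Both sides are the negative of the sum of `b` over `sᶜ ×ˢ s`. -/
lemma sum_offDiag_compl {b : α → α → M} (hrow : ∀ x, ∑ y ∈ univ \ {x}, b x y = 0)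
    (hcol : ∀ y, ∑ x ∈ univ \ {y}, b x y = 0) (s : Finset α) :
    ∑ p ∈ sᶜ.offDiag, b p.1 p.2 = ∑ p ∈ s.offDiag, b p.1 p.2 := by
  calc ∑ p ∈ sᶜ.offDiag, b p.1 p.2
      = ∑ x ∈ sᶜ, ∑ y ∈ sᶜ \ {x}, b x y := sum_offDiag_eq_sum_sum _ _
    _ = ∑ x ∈ sᶜ, -∑ y ∈ s, b x y := sum_congr rfl fun x hx =>
        sum_compl_sdiff_singleton_eq_neg_sum (hrow x) (mem_compl.mp hx)
    _ = ∑ y ∈ s, -∑ x ∈ sᶜ, b x y := by simp only [sum_neg_distrib, sum_comm (s := sᶜ)]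
    _ = ∑ y ∈ s, ∑ x ∈ s \ {y}, b x y := sum_congr rfl fun y hy => by
        rw [← sum_compl_sdiff_singleton_eq_neg_sum (hcol y) (notMem_compl.mpr hy), compl_compl]
    _ = ∑ p ∈ s.offDiag, b p.1 p.2 := (sum_finset_product_right' _ _ _ fun p => by
        simp only [mem_offDiag, mem_sdiff, mem_singleton]; tauto).symm

lemma sum_offDiag_compl_pair {b : α → α → M} (hrow : ∀ x, ∑ y ∈ univ \ {x}, b x y = 0)
    (hcol : ∀ y, ∑ x ∈ univ \ {y}, b x y = 0) {i j : α} (hij : i ≠ j) :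
    ∑ p ∈ ({i, j} : Finset α)ᶜ.offDiag, b p.1 p.2 = b i j + b j i := by
  rw [sum_offDiag_compl hrow hcol, sum_offDiag_eq_sum_sum, sum_pair hij,
    insert_sdiff_cancel (by simpa using hij), pair_comm,
    insert_sdiff_cancel (by simpa using hij.symm), sum_singleton, sum_singleton]

end OffDiagSums

section OffDiagExpectations

variable {α K : Type*} [Fintype α] [DecidableEq α] [Field K] [CharZero K]

lemma expect_offDiag_univ (f : α → α → K) : 𝔼 p ∈ univ.offDiag, f p.1 p.2 =
      1 / ((Fintype.card α : K) * (Fintype.card α - 1)) * ∑ r, ∑ s ∈ univ \ {r}, f r s := by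
  rw [expect_eq_sum_div_card, sum_offDiag_eq_sum_sum, cast_card_offDiag, card_univ,
    one_div_mul_eq_div]

lemma expect_offDiag_compl_pair {b : α → α → K} (hrow : ∀ x, ∑ y ∈ univ \ {x}, b x y = 0)
    (hcol : ∀ y, ∑ x ∈ univ \ {y}, b x y = 0) {i j : α} (hij : i ≠ j) :
    𝔼 p ∈ ({i, j} : Finset α)ᶜ.offDiag, b p.1 p.2 =
      (b i j + b j i) / (((Fintype.card α : K) - 2) * (Fintype.card α - 3)) := by
  have hcard : (#({i, j} : Finset α)ᶜ : K) = Fintype.card α - 2 := by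
    rw [compl_eq_univ_sdiff, cast_card_sdiff (subset_univ _), card_pair hij, card_univ,
      Nat.cast_ofNat]
  rw [expect_eq_sum_div_card, sum_offDiag_compl_pair hrow hcol hij, cast_card_offDiag, hcard]
  ring

end OffDiagExpectations

section RandomPermutation

lemma permE_eq_expect (n : ℕ) (f : Equiv.Perm (Fin n) → ℝ) : permE n f = 𝔼 π, f π := by
  rw [permE, Fintype.expect_eq_sum_div_card, Fintype.card_perm, Fintype.card_fin]

variable {α M : Type*} [Fintype α] [DecidableEq α]

lemma sum_sdiff_singleton_comp_perm [AddCommMonoid M] (π : Equiv.Perm α) (x : α) (f : α → M) :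
    ∑ y ∈ univ \ {x}, f (π y) = ∑ y ∈ univ \ {π x}, f y :=
  sum_equiv π (by simp) (by simp)

variable [AddCommMonoid M] [Module ℚ≥0 M]

lemma expect_perm_comp_eq_of_injective {m : ℕ} {x y : Fin m → α} (hx : x.Injective)
    (hy : y.Injective) (f : (Fin m → α) → M) :
    𝔼 π : Equiv.Perm α, f (π ∘ x) = 𝔼 π : Equiv.Perm α, f (π ∘ y) := by
  have := Equiv.Perm.isMultiplyPretransitive α m
  obtain ⟨σ, hσ⟩ := MulAction.exists_smul_eq (Equiv.Perm α) (⟨y, hy⟩ : Fin m ↪ α) ⟨x, hx⟩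
  have hσ : σ ∘ y = x := congrArg DFunLike.coe hσ
  exact Fintype.expect_equiv (Equiv.mulRight σ) _ _ fun π => by rw [← hσ]; rfl

lemma expect_perm_comp_eq_expect_expect {m : ℕ} {κ : Type*} {s : Finset κ} (hs : s.Nonempty)
    {x : Fin m → α} (hx : x.Injective) {y : κ → Fin m → α} (hy : ∀ p ∈ s, (y p).Injective)
    (f : (Fin m → α) → M) :
    𝔼 π : Equiv.Perm α, f (π ∘ x) = 𝔼 π : Equiv.Perm α, 𝔼 p ∈ s, f (π ∘ y p) := by
  rw [expect_comm, ← expect_const hs (𝔼 π : Equiv.Perm α, f (π ∘ x))]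
  exact expect_congr rfl fun p hp => expect_perm_comp_eq_of_injective hx (hy p hp) f

lemma expect_perm_apply_pair {i j : α} (hij : i ≠ j) (f : α → α → M) :
    𝔼 π : Equiv.Perm α, f (π i) (π j) = 𝔼 p ∈ univ.offDiag, f p.1 p.2 := by
  have hne : (univ : Finset α).offDiag.Nonempty := ⟨(i, j), by simpa using hij⟩
  calc 𝔼 π : Equiv.Perm α, f (π i) (π j)
      = 𝔼 π : Equiv.Perm α, 𝔼 p ∈ univ.offDiag, f (π p.1) (π p.2) :=
        expect_perm_comp_eq_expect_expect hne (x := ![i, j]) (y := fun p => ![p.1, p.2])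
          (by simpa [Function.Injective, Fin.forall_fin_two, eq_comm] using hij)
          (fun p hp => by simpa [Function.Injective, Fin.forall_fin_two, eq_comm] using hp)
          fun z => f (z 0) (z 1)
    _ = 𝔼 _π : Equiv.Perm α, 𝔼 p ∈ univ.offDiag, f p.1 p.2 := expect_congr rfl fun π _ =>
        expect_equiv (π.prodCongr π) (by simp) (by simp)
    _ = 𝔼 p ∈ univ.offDiag, f p.1 p.2 := Fintype.expect_const _

lemma expect_perm_apply_two_pairs {i j k l : α} (hij : i ≠ j)
    (hkl : (k, l) ∈ ({i, j} : Finset α)ᶜ.offDiag) (f : α → α → α → α → M) :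
    𝔼 π : Equiv.Perm α, f (π i) (π j) (π k) (π l) =
      𝔼 π : Equiv.Perm α, 𝔼 p ∈ ({i, j} : Finset α)ᶜ.offDiag,
        f (π i) (π j) (π p.1) (π p.2) := by
  have hinj : ∀ p ∈ ({i, j} : Finset α)ᶜ.offDiag, ![i, j, p.1, p.2].Injective := by
    rintro ⟨p, q⟩ hpq
    obtain ⟨⟨hip, hjp⟩, ⟨hiq, hjq⟩, hpq⟩ : (i ≠ p ∧ j ≠ p) ∧ (i ≠ q ∧ j ≠ q) ∧ p ≠ q := by
      simpa only [mem_offDiag, mem_compl, mem_insert, mem_singleton, not_or, eq_comm] using hpq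
    exact List.nodup_ofFn.mp (by simp [*])
  exact expect_perm_comp_eq_expect_expect ⟨(k, l), hkl⟩ (x := ![i, j, k, l])
    (y := fun p => ![i, j, p.1, p.2]) (hinj _ hkl) hinj fun z => f (z 0) (z 1) (z 2) (z 3)

end RandomPermutation

theorem stmt7_general {α K : Type*} [Fintype α] [DecidableEq α] [Field K] [CharZero K]
    (a : α → α → K) {b : α → α → K} (hrow : ∀ r, ∑ s ∈ univ \ {r}, b r s = 0)
    (hcol : ∀ s, ∑ r ∈ univ \ {s}, b r s = 0) {i j k l : α} (hij : i ≠ j) (hik : i ≠ k)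
    (hil : i ≠ l) (hjk : j ≠ k) (hjl : j ≠ l) (hkl : k ≠ l) :
    𝔼 π : Equiv.Perm α, a (π i) (π j) * b (π k) (π l) =
      (𝔼 p ∈ univ.offDiag, a p.1 p.2 * (b p.1 p.2 + b p.2 p.1)) /
        (((Fintype.card α : K) - 2) * (Fintype.card α - 3)) := by
  have hinner (π : Equiv.Perm α) : 𝔼 p ∈ ({i, j} : Finset α)ᶜ.offDiag, b (π p.1) (π p.2) =
      (b (π i) (π j) + b (π j) (π i)) /
        (((Fintype.card α : K) - 2) * (Fintype.card α - 3)) :=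
    expect_offDiag_compl_pair (b := fun r s => b (π r) (π s))
      (fun r => by rw [sum_sdiff_singleton_comp_perm π r (b (π r)), hrow])
      (fun s => by rw [sum_sdiff_singleton_comp_perm π s (b · (π s)), hcol]) hij
  calc 𝔼 π : Equiv.Perm α, a (π i) (π j) * b (π k) (π l)
      = 𝔼 π : Equiv.Perm α, 𝔼 p ∈ ({i, j} : Finset α)ᶜ.offDiag,
          a (π i) (π j) * b (π p.1) (π p.2) :=
        expect_perm_apply_two_pairs hij (by simp [*, Ne.symm]) fun r s t u => a r s * b t u
    _ = (𝔼 π : Equiv.Perm α, a (π i) (π j) * (b (π i) (π j) + b (π j) (π i))) /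
          (((Fintype.card α : K) - 2) * (Fintype.card α - 3)) := by
        simp only [← mul_expect, hinner, ← mul_div_assoc, expect_div]
    _ = _ := by rw [expect_perm_apply_pair hij fun r s => a r s * (b r s + b s r)]

/-- all indices distinct. For a uniformly distributed random permutation `π` and
four distinct indices `i, j, k, ℓ`,
`E[b_{π(i)π(j)} b_{π(k)π(ℓ)}] = 2μ₂/((n-2)(n-3))` for a symmetric array `b` with vanishing
row sums. -/
theorem stmt7 (n : ℕ) (hn : 4 ≤ n)
    (b : Fin n → Fin n → ℝ)
    (hb_symm : ∀ r s, b r s = b s r)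
    (hb_rowsum : ∀ r : Fin n, ∑ s ∈ univ \ {r}, b r s = 0)
    (μ₂ : ℝ)
    (hμ₂ : μ₂ = (1 / ((n : ℝ) * (n - 1))) * ∑ r : Fin n, ∑ s ∈ univ \ {r}, (b r s) ^ 2)
    (i j k ℓ : Fin n) (hij : i ≠ j) (hik : i ≠ k) (hiℓ : i ≠ ℓ)
    (hjk : j ≠ k) (hjℓ : j ≠ ℓ) (hkℓ : k ≠ ℓ) :
    permE n (fun π => b (π i) (π j) * b (π k) (π ℓ)) =
      2 * μ₂ / (((n : ℝ) - 2) * ((n : ℝ) - 3)) := by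
  have hb_colsum : ∀ s, ∑ r ∈ univ \ {s}, b r s = 0 := fun s => by
    simpa only [hb_symm s] using hb_rowsum s
  have hsq (r s : Fin n) : b r s * (b r s + b s r) = 2 * b r s ^ 2 := by
    rw [hb_symm s r]; ring
  rw [permE_eq_expect, stmt7_general b hb_rowsum hb_colsum hij hik hiℓ hjk hjℓ hkℓ, hμ₂]
  simp only [hsq, ← mul_expect, expect_offDiag_univ fun r s => b r s ^ 2, Fintype.card_fin]
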